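/- Let β = 1 and 2 < α ≤ 4, and let f(k) = α k (1−k). Then the second iterate f∘f is turbulent if and only if α > 1 + √5 and f(f(f(1/2))) ≤ (α−1)/α. -/

import Mathlib

/-- A continuous self-map `h` of the interval `[a,b]` is turbulent if there are
points `x₁, x₂, x₃` in `[a,b]` with `h x₂ = h x₁ = x₁`, `h x₃ = x₂`, and either
`x₁ < x₃ < x₂` or `x₂ < x₃ < x₁`. -/
def Turbulent (a b : ℝ) (h : ℝ → ℝ) : Prop :=
  ∃ x₁ ∈ Set.Icc a b, ∃ x₂ ∈ Set.Icc a b, ∃ x₃ ∈ Set.Icc a b,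
    h x₂ = x₁ ∧ h x₁ = x₁ ∧ h x₃ = x₂ ∧
      ((x₁ < x₃ ∧ x₃ < x₂) ∨ (x₂ < x₃ ∧ x₃ < x₁))

/-!
Write `q = 1/α` and `p = 1 - q`, so that `f q = f p = p`, and let `c = f (f (1/2))`.
For `α > 2`, the map `f ∘ f` is turbulent exactly when `c ≤ q`.

If `c ≤ q`, the graph of `f ∘ f` descends from `(q, p)` to height at most `q` at `1/2`, so the
intermediate value theorem yields a turbulent triple with `x₁ = p` and `x₂ = q`.

If `q < c`, then `f` exchanges the intervals `[q, p]` and `[p, f (1/2)]`, and `f ∘ f` moves the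
points of `(0, q)` to the right; hence every turbulent triple lies in one of these two intervals,
and `f` carries a triple of the second into the first. On `[q, p]` the graph of `f ∘ f` is V-shaped
and symmetric about `1/2`, so `x₂ = 1 - x₁ < 1/2 < x₁` and `c ≤ x₂ < 1/2`. But then `f ∘ f` lies
below the diagonal on `(1/2, p)`, which forces `x₁ = p` and `x₂ = q < c`.

Finally `c ≤ q` means that `c < 1/2`, which is the condition `α > 1 + √5`, and `f c ≤ f q = p`.
For `α ≤ 2`, both `f` and `f ∘ f` are injective on `(-∞, 1/2]`, which contains their ranges.
-/

open Set

namespace Turbulent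

variable {a b c d x₁ x₂ : ℝ} {g h k : ℝ → ℝ}

theorem of_apply_le (hh : ContinuousOn h (Icc x₂ c)) (ha : a ≤ x₂) (hc : x₂ ≤ c) (hcx : c ≤ x₁)
    (hb : x₁ ≤ b) (hx₂ : h x₂ = x₁) (hx₁ : h x₁ = x₁) (hne : x₂ ≠ x₁) (hle : h c ≤ x₂) :
    Turbulent a b h := by
  have hlt : x₂ < x₁ := (hc.trans hcx).lt_of_ne hne
  obtain ⟨x₃, ⟨h₂₃, h₃c⟩, hx₃⟩ := intermediate_value_Icc' hc hh ⟨hle, hlt.le.trans_eq hx₂.symm⟩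
  have hne₂ : x₂ ≠ x₃ := fun h₂₃ => hne (by rw [← hx₃, ← h₂₃, hx₂])
  have hne₁ : x₃ ≠ x₁ := fun h₃₁ => hne (by rw [← hx₃, h₃₁, hx₁])
  exact ⟨x₁, ⟨ha.trans hlt.le, hb⟩, x₂, ⟨ha, hlt.le.trans hb⟩,
    x₃, ⟨ha.trans h₂₃, (h₃c.trans hcx).trans hb⟩, hx₂, hx₁, hx₃,
    Or.inr ⟨h₂₃.lt_of_ne hne₂, (h₃c.trans hcx).lt_of_ne hne₁⟩⟩

theorem not_injOn_range (ht : Turbulent a b h) : ¬ InjOn h (range h) := by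
  obtain ⟨x₁, -, x₂, -, x₃, -, hx₂, hx₁, hx₃, hord⟩ := ht
  intro hinj
  have heq : x₂ = x₁ := hinj ⟨x₃, hx₃⟩ ⟨x₁, hx₁⟩ (hx₂.trans hx₁.symm)
  rcases hord with hord | hord <;> linarith

theorem map_of_strictAntiOn (ht : Turbulent a b h) (hg : StrictAntiOn g (Icc a b))
    (hmaps : MapsTo g (Icc a b) (Icc c d)) (hsemi : Function.Semiconj g h k) :
    Turbulent c d k := by
  obtain ⟨x₁, m₁, x₂, m₂, x₃, m₃, hx₂, hx₁, hx₃, hord⟩ := ht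
  refine ⟨g x₁, hmaps m₁, g x₂, hmaps m₂, g x₃, hmaps m₃, ?_, ?_, ?_, ?_⟩
  · rw [← hsemi, hx₂]
  · rw [← hsemi, hx₁]
  · rw [← hsemi, hx₃]
  · exact hord.symm.imp (fun ⟨h₂₃, h₃₁⟩ => ⟨hg m₃ m₁ h₃₁, hg m₂ m₃ h₂₃⟩)
      (fun ⟨h₁₃, h₃₂⟩ => ⟨hg m₃ m₂ h₃₂, hg m₁ m₃ h₁₃⟩)

theorem Icc_of_lt_apply (ht : Turbulent a b h) (ha : h a = a) (hac : a < c)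
    (hlt : ∀ x ∈ Ioo a c, x < h x) (hle : ∀ x ∈ Icc c d, c ≤ h x)
    (hd : ∀ x ∈ Icc a b, h x ≤ d) : Turbulent c d h := by
  obtain ⟨x₁, m₁, x₂, m₂, x₃, m₃, hx₂, hx₁, hx₃, hord⟩ := ht
  have hx₁d : x₁ ≤ d := hx₁ ▸ hd x₁ m₁
  have hx₂d : x₂ ≤ d := hx₃ ▸ hd x₃ m₃
  have hax₂ : a < x₂ := by
    refine m₂.1.lt_of_ne ?_
    rintro rfl
    rcases hord with hord | hord <;> linarith
  have hax₁ : a < x₁ := by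
    rcases lt_or_ge x₂ c with hx₂c | hcx₂
    · linarith [hlt x₂ ⟨hax₂, hx₂c⟩]
    · linarith [hle x₂ ⟨hcx₂, hx₂d⟩]
  have hcx₁ : c ≤ x₁ := by
    by_contra! hx₁c
    exact (hlt x₁ ⟨hax₁, hx₁c⟩).ne' hx₁
  have hcx₂ : c ≤ x₂ := by
    by_contra! hx₂c
    have ⟨h₂₃, h₃₁⟩ : x₂ < x₃ ∧ x₃ < x₁ := hord.resolve_left fun h => by linarith
    rcases lt_or_ge x₃ c with hx₃c | hcx₃
    · linarith [hlt x₃ ⟨hax₂.trans h₂₃, hx₃c⟩]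
    · linarith [hle x₃ ⟨hcx₃, h₃₁.le.trans hx₁d⟩]
  exact ⟨x₁, ⟨hcx₁, hx₁d⟩, x₂, ⟨hcx₂, hx₂d⟩, x₃, by constructor <;> grind, hx₂, hx₁, hx₃, hord⟩

theorem Icc_left_or_right (ht : Turbulent a b h) (hl : MapsTo h (Icc a c) (Icc a c))
    (hr : MapsTo h (Icc c b) (Icc c b)) : Turbulent a c h ∨ Turbulent c b h := by
  obtain ⟨x₁, m₁, x₂, m₂, x₃, m₃, hx₂, hx₁, hx₃, hord⟩ := ht
  rcases le_total x₂ c with hc | hc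
  · have hx₁c : x₁ ≤ c := hx₂ ▸ (hl ⟨m₂.1, hc⟩).2
    exact .inl ⟨x₁, ⟨m₁.1, hx₁c⟩, x₂, ⟨m₂.1, hc⟩, x₃, ⟨m₃.1, by grind⟩, hx₂, hx₁, hx₃, hord⟩
  · have hcx₁ : c ≤ x₁ := hx₂ ▸ (hr ⟨hc, m₂.2⟩).1
    exact .inr ⟨x₁, ⟨hcx₁, m₁.2⟩, x₂, ⟨hc, m₂.2⟩, x₃, ⟨by grind, m₃.2⟩, hx₂, hx₁, hx₃, hord⟩

end Turbulent

/-- The logistic map `f_α`, as a function on the whole real line. -/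
def logisticMap (α x : ℝ) : ℝ := α * x * (1 - x)

namespace logisticMap

variable {α x y : ℝ}

protected theorem continuous (α : ℝ) : Continuous (logisticMap α) := by
  unfold logisticMap
  fun_prop

theorem apply_sub_apply (α x y : ℝ) :
    logisticMap α y - logisticMap α x = α * ((y - x) * (1 - x - y)) := by
  unfold logisticMap
  ring

theorem apply_le_apply_iff (hα : 0 < α) :
    logisticMap α x ≤ logisticMap α y ↔ 0 ≤ (y - x) * (1 - x - y) := by
  rw [← sub_nonneg, apply_sub_apply, mul_nonneg_iff_of_pos_left hα]

theorem apply_lt_apply_iff (hα : 0 < α) :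
    logisticMap α x < logisticMap α y ↔ 0 < (y - x) * (1 - x - y) := by
  rw [← sub_pos, apply_sub_apply, mul_pos_iff_of_pos_left hα]

theorem apply_eq_apply_iff (hα : α ≠ 0) :
    logisticMap α x = logisticMap α y ↔ x = y ∨ x = 1 - y := by
  rw [eq_comm, ← sub_eq_zero, apply_sub_apply]
  simp only [mul_eq_zero, hα, false_or]
  grind

theorem apply_le_apply_half (hα : 0 < α) (x : ℝ) : logisticMap α x ≤ logisticMap α (1 / 2) := by
  rw [apply_le_apply_iff hα]
  linarith [sq_nonneg (x - 1 / 2)]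

theorem strictMonoOn_Iic_half (hα : 0 < α) : StrictMonoOn (logisticMap α) (Iic (1 / 2)) :=
  fun x _ y (hy : y ≤ 1 / 2) hxy =>
    (apply_lt_apply_iff hα).2 (mul_pos (by linarith) (by linarith))

theorem strictAntiOn_Ici_half (hα : 0 < α) : StrictAntiOn (logisticMap α) (Ici (1 / 2)) :=
  fun x (hx : 1 / 2 ≤ x) y _ hxy =>
    (apply_lt_apply_iff hα).2 (mul_pos_of_neg_of_neg (by linarith) (by linarith))

theorem apply_one_sub_inv (hα : α ≠ 0) : logisticMap α (1 - α⁻¹) = 1 - α⁻¹ := by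
  unfold logisticMap
  field_simp
  ring

theorem apply_inv (hα : α ≠ 0) : logisticMap α α⁻¹ = 1 - α⁻¹ := by
  simp only [logisticMap, mul_inv_cancel₀ hα, one_mul]

theorem self_lt_apply (hα : 0 < α) (hx₀ : 0 < x) (hx : x < 1 - α⁻¹) : x < logisticMap α x := by
  have hdiff : logisticMap α x - x = α * x * (1 - α⁻¹ - x) := by
    unfold logisticMap
    field_simp
    ring
  rw [← sub_pos, hdiff]
  exact mul_pos (mul_pos hα hx₀) (sub_pos.2 hx)

theorem inv_lt_half (hα : 2 < α) : α⁻¹ < 1 / 2 := by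
  rw [one_div]
  exact inv_strictAnti₀ two_pos hα

-- The second factor accounts for the 2-cycle of the map.
theorem apply_apply_sub_self (α x : ℝ) :
    logisticMap α (logisticMap α x) - x =
      (logisticMap α x - x) * (1 + α * (1 - x) * (1 - α * x)) := by
  unfold logisticMap
  ring

theorem apply_apply_half_lt_half_iff (hα : 2 < α) :
    logisticMap α (logisticMap α (1 / 2)) < 1 / 2 ↔ 1 + √5 < α := by
  have hpos : 0 < logisticMap α (1 / 2) - 1 / 2 := by
    unfold logisticMap
    linarith
  calc logisticMap α (logisticMap α (1 / 2)) < 1 / 2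
      ↔ 1 + α * (1 - 1 / 2) * (1 - α * (1 / 2)) < 0 := by
        rw [← sub_neg, apply_apply_sub_self, ← neg_pos, ← mul_neg,
          mul_pos_iff_of_pos_left hpos, neg_pos]
    _ ↔ 5 < (α - 1) ^ 2 := by constructor <;> intro h <;> linarith
    _ ↔ √5 < α - 1 := (Real.sqrt_lt' (by linarith)).symm
    _ ↔ 1 + √5 < α := lt_sub_iff_add_lt'

theorem apply_apply_lt_self (hα : 1 + √5 < α) (hx : 1 / 2 ≤ x) (hxp : x < 1 - α⁻¹) :
    logisticMap α (logisticMap α x) < x := by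
  have hsqrt : 2 < √5 := (Real.lt_sqrt two_pos.le).2 (by norm_num)
  have hα₀ : 0 < α := by linarith
  have hsq : 5 < (α - 1) ^ 2 := (Real.sqrt_lt' (by linarith)).1 (by linarith)
  have hu : 1 < α * (1 - x) := by
    rw [← inv_lt_iff_one_lt_mul₀' hα₀]
    linarith
  have hu' : α * (1 - x) ≤ α / 2 := by linarith [mul_le_mul_of_nonneg_left hx hα₀.le]
  have hperiod : 1 < α * (1 - x) * (α * x - 1) := by
    rcases le_total α 4 with hα₄ | hα₄
    · calc 1 < α / 2 * (α / 2 - 1) := by linarith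
        _ ≤ α / 2 * (α / 2 - 1) + (α / 2 - α * (1 - x)) * (α * (1 - x) - (α / 2 - 1)) :=
          le_add_of_nonneg_right (mul_nonneg (by linarith) (by linarith))
        _ = α * (1 - x) * (α * x - 1) := by ring
    · exact one_lt_mul_of_lt_of_le hu (by linarith)
  rw [← sub_neg, apply_apply_sub_self]
  exact mul_neg_of_pos_of_neg (sub_pos.2 (self_lt_apply hα₀ (by linarith) hxp)) (by linarith)

theorem mapsTo_Icc_inv (hα : 0 < α) :
    MapsTo (logisticMap α) (Icc α⁻¹ (1 - α⁻¹)) (Icc (1 - α⁻¹) (logisticMap α (1 / 2))) := by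
  rintro x ⟨hx, hx'⟩
  refine ⟨?_, apply_le_apply_half hα x⟩
  rw [← apply_inv hα.ne', apply_le_apply_iff hα]
  exact mul_nonneg (by linarith) (by linarith)

theorem mapsTo_Icc_one_sub_inv (hα : 2 < α)
    (hc : α⁻¹ ≤ logisticMap α (logisticMap α (1 / 2))) :
    MapsTo (logisticMap α) (Icc (1 - α⁻¹) (logisticMap α (1 / 2))) (Icc α⁻¹ (1 - α⁻¹)) := by
  rintro x ⟨hx, hx'⟩
  have hα₀ : 0 < α := by linarith
  have hq := inv_lt_half hα
  have hanti := (strictAntiOn_Ici_half hα₀).antitoneOn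
  have hp : 1 - α⁻¹ ∈ Ici (1 / 2 : ℝ) := mem_Ici.2 (by linarith)
  have hxI : x ∈ Ici (1 / 2 : ℝ) := mem_Ici.2 (by linarith)
  exact ⟨hc.trans (hanti hxI (mem_Ici.2 (by linarith)) hx'),
    (hanti hp hxI hx).trans_eq (apply_one_sub_inv hα₀.ne')⟩

theorem self_lt_apply_apply (hα : 2 < α) (hx₀ : 0 < x) (hx : x < α⁻¹) :
    x < logisticMap α (logisticMap α x) := by
  have hα₀ : 0 < α := by linarith
  have hq := inv_lt_half hα
  have hxf : x < logisticMap α x := self_lt_apply hα₀ hx₀ (by linarith)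
  have hfp : logisticMap α x < 1 - α⁻¹ := apply_inv hα₀.ne' ▸
    strictMonoOn_Iic_half hα₀ (mem_Iic.2 (by linarith)) (mem_Iic.2 hq.le) hx
  exact hxf.trans (self_lt_apply hα₀ (hx₀.trans hxf) hfp)

theorem inv_le_apply_apply (hα : 2 < α) (hc : α⁻¹ ≤ logisticMap α (logisticMap α (1 / 2)))
    (hx : x ∈ Icc α⁻¹ (logisticMap α (1 / 2))) : α⁻¹ ≤ logisticMap α (logisticMap α x) := by
  have hα₀ : 0 < α := by linarith
  have hK := mapsTo_Icc_inv hα₀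
  have hL := mapsTo_Icc_one_sub_inv hα hc
  rcases le_total x (1 - α⁻¹) with hxp | hxp
  · exact (hL (hK ⟨hx.1, hxp⟩)).1
  · linarith [inv_lt_half hα, (hK (hL ⟨hxp, hx.2⟩)).1]

theorem not_turbulent_Icc_inv (hα : 2 < α) (hc : α⁻¹ < logisticMap α (logisticMap α (1 / 2))) :
    ¬ Turbulent α⁻¹ (1 - α⁻¹) (logisticMap α ∘ logisticMap α) := by
  rintro ⟨x₁, m₁, x₂, m₂, x₃, m₃, hx₂, hx₁, hx₃, hord⟩
  simp only [Function.comp_apply] at hx₁ hx₂ hx₃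
  have hα₀ : 0 < α := by linarith
  have hanti := strictAntiOn_Ici_half hα₀
  have upper {x} (hx : x ∈ Icc α⁻¹ (1 - α⁻¹)) : logisticMap α x ∈ Ici (1 / 2 : ℝ) := by
    exact mem_Ici.2 (by linarith [inv_lt_half hα, (mapsTo_Icc_inv hα₀ hx).1])
  have hsymm : x₂ = 1 - x₁ := by
    have hf : logisticMap α x₂ = logisticMap α x₁ :=
      hanti.injOn (upper m₂) (upper m₁) (hx₂.trans hx₁.symm)
    exact ((apply_eq_apply_iff hα₀.ne').1 hf).resolve_left (by grind)
  have hlt : x₂ < x₁ := by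
    have hf : logisticMap α x₁ < logisticMap α x₃ := by
      rw [apply_lt_apply_iff hα₀, ← hsymm]
      rcases hord with ⟨h₁₃, h₃₂⟩ | ⟨h₂₃, h₃₁⟩
      · exact mul_pos (by linarith) (by linarith)
      · exact mul_pos_of_neg_of_neg (by linarith) (by linarith)
    calc x₂ = logisticMap α (logisticMap α x₃) := hx₃.symm
      _ < logisticMap α (logisticMap α x₁) := hanti (upper m₁) (upper m₃) hf
      _ = x₁ := hx₁
  have hmin : logisticMap α (logisticMap α (1 / 2)) ≤ x₂ := hx₃ ▸
    hanti.antitoneOn (upper m₃) ((upper m₃).trans (apply_le_apply_half hα₀ x₃))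
      (apply_le_apply_half hα₀ x₃)
  have hα' : 1 + √5 < α := (apply_apply_half_lt_half_iff hα).1 (by linarith)
  have hbelow := apply_apply_lt_self hα' (x := x₁) (by linarith) (by linarith)
  exact hbelow.ne hx₁

theorem not_turbulent_of_inv_lt (hα : 2 < α)
    (hc : α⁻¹ < logisticMap α (logisticMap α (1 / 2))) :
    ¬ Turbulent 0 1 (logisticMap α ∘ logisticMap α) := by
  intro ht
  have hα₀ : 0 < α := by linarith
  have hK := mapsTo_Icc_inv hα₀
  have hL := mapsTo_Icc_one_sub_inv hα hc.le
  have hanti : StrictAntiOn (logisticMap α) (Icc (1 - α⁻¹) (logisticMap α (1 / 2))) :=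
    (strictAntiOn_Ici_half hα₀).mono fun x hx => mem_Ici.2 (by linarith [hx.1, inv_lt_half hα])
  have htM : Turbulent α⁻¹ (logisticMap α (1 / 2)) (logisticMap α ∘ logisticMap α) :=
    ht.Icc_of_lt_apply (by simp [logisticMap]) (inv_pos.2 hα₀)
      (fun _ hx => self_lt_apply_apply hα hx.1 hx.2) (fun _ hx => inv_le_apply_apply hα hc.le hx)
      fun _ _ => apply_le_apply_half hα₀ _
  apply not_turbulent_Icc_inv hα hc
  rcases htM.Icc_left_or_right (hL.comp hK) (hK.comp hL) with htK | htL
  · exact htK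
  · exact htL.map_of_strictAntiOn hanti hL fun _ => rfl

theorem turbulent_of_le_inv (hα : 2 < α) (hc : logisticMap α (logisticMap α (1 / 2)) ≤ α⁻¹) :
    Turbulent 0 1 (logisticMap α ∘ logisticMap α) := by
  have hα₀ : 0 < α := by linarith
  have hq₀ : 0 < α⁻¹ := inv_pos.2 hα₀
  have hq := inv_lt_half hα
  have hfq := apply_inv hα₀.ne'
  have hfp := apply_one_sub_inv hα₀.ne'
  have hcont := (logisticMap.continuous α).comp (logisticMap.continuous α)
  refine .of_apply_le (x₁ := 1 - α⁻¹) (x₂ := α⁻¹) (c := 1 / 2) hcont.continuousOn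
    hq₀.le hq.le (by linarith) (by linarith) ?_ ?_ (by linarith) hc
  · simp only [Function.comp_apply, hfq, hfp]
  · simp only [Function.comp_apply, hfp]

theorem turbulent_comp_self_iff (hα : 2 < α) :
    Turbulent 0 1 (logisticMap α ∘ logisticMap α) ↔
      logisticMap α (logisticMap α (1 / 2)) ≤ α⁻¹ :=
  ⟨fun ht => not_lt.1 fun hc => not_turbulent_of_inv_lt hα hc ht, turbulent_of_le_inv hα⟩

theorem apply_apply_half_le_inv_iff (hα : 2 < α) :
    logisticMap α (logisticMap α (1 / 2)) ≤ α⁻¹ ↔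
      1 + √5 < α ∧ logisticMap α (logisticMap α (logisticMap α (1 / 2))) ≤ 1 - α⁻¹ := by
  have hα₀ : 0 < α := by linarith
  have hq := inv_lt_half hα
  have hle {x} (hx : x < 1 / 2) : logisticMap α x ≤ 1 - α⁻¹ ↔ x ≤ α⁻¹ := by
    rw [← apply_inv hα₀.ne']
    exact (strictMonoOn_Iic_half hα₀).le_iff_le (mem_Iic.2 hx.le) (mem_Iic.2 hq.le)
  rw [← apply_apply_half_lt_half_iff hα]
  exact ⟨fun h => ⟨h.trans_lt hq, (hle (h.trans_lt hq)).2 h⟩, fun ⟨h, h'⟩ => (hle h).1 h'⟩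

theorem not_turbulent_of_le_two (a b : ℝ) (hα₀ : 0 < α) (hα : α ≤ 2) :
    ¬ Turbulent a b (logisticMap α ∘ logisticMap α) := by
  have hmaps (x : ℝ) : logisticMap α x ∈ Iic (1 / 2 : ℝ) := by
    refine (apply_le_apply_half hα₀ x).trans ?_
    unfold logisticMap
    linarith
  have hmono := strictMonoOn_Iic_half hα₀
  refine fun ht => ht.not_injOn_range ?_
  exact (hmono.injOn.comp hmono.injOn fun x _ => hmaps x).mono (range_subset_iff.2 fun x => hmaps _)

end logisticMap

theorem logistic_turbulent_iff_general
    (α : ℝ) (hα : 0 < α) (f : ℝ → ℝ) (hf : ∀ k, f k = α * k * (1 - k)) :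
    Turbulent 0 1 (f ∘ f) ↔
      α > 1 + Real.sqrt 5 ∧ f (f (f (1 / 2))) ≤ (α - 1) / α := by
  obtain rfl : f = logisticMap α := funext hf
  rcases le_or_gt α 2 with hα₂ | hα₂
  · have hα_not_gt : ¬ 1 + √5 < α := by
      have hsqrt : 1 ≤ √5 := Real.one_le_sqrt.2 (by norm_num)
      linarith
    exact iff_of_false (logisticMap.not_turbulent_of_le_two 0 1 hα hα₂) fun h => hα_not_gt h.1
  · rw [sub_div, div_self hα.ne', one_div α, logisticMap.turbulent_comp_self_iff hα₂,
      logisticMap.apply_apply_half_le_inv_iff hα₂]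

/-- For the logistic map `f(k) = α k (1−k)` with `2 < α ≤ 4`, the second iterate
`f ∘ f` is turbulent iff `α > 1 + √5` and `f³(1/2) ≤ (α−1)/α`. -/
theorem logistic_turbulent_iff
    (α : ℝ) (hα₁ : 2 < α) (hα₂ : α ≤ 4)
    (f : ℝ → ℝ) (hf : ∀ k, f k = α * k * (1 - k)) :
    Turbulent 0 1 (f ∘ f) ↔
      α > 1 + Real.sqrt 5 ∧ f (f (f (1 / 2))) ≤ (α - 1) / α :=
  logistic_turbulent_iff_general α (zero_lt_two.trans hα₁) f hf
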